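/- Let d ≥ 1 and let Λ_1, …, Λ_d ⊂ ℕ be arbitrary infinite Hadamard lacunary sets. Then there exists a function ψ = (ψ_1, …, ψ_d) ∈ H²(𝔻, ℂ^d) which is cyclic for the backward shift S* on H²(𝔻, ℂ^d) and satisfies σ(ψ_i) = Λ_i for every 1 ≤ i ≤ d. -/

import Mathlib

open scoped InnerProductSpace ENNReal
noncomputable section

/-- The Hardy space `H²(𝔻, X)` identified with `ℓ²(ℕ, X)`. -/
abbrev H2 (X : Type*) [NormedAddCommGroup X] [InnerProductSpace ℂ X] : Type _ :=
  lp (fun _ : ℕ => X) 2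

variable {X : Type*} [NormedAddCommGroup X] [InnerProductSpace ℂ X]

/-- The backward shift `S*` on `H²(𝔻, X)`. -/
def bshift (f : H2 X) : H2 X :=
  ⟨fun n => f (n + 1), by
    have h : Summable fun n : ℕ => ‖f n‖ ^ (2 : ℝ≥0∞).toReal :=
      (memℓp_gen_iff (by norm_num)).1 (lp.memℓp f)
    exact memℓp_gen ((summable_nat_add_iff 1).2 h)⟩

/-- `E_F`: the smallest closed `S*`-invariant subspace containing the family `F`. -/
def EF (F : Set (H2 X)) : Submodule ℂ (H2 X) :=
  (Submodule.span ℂ {g : H2 X | ∃ f ∈ F, ∃ n : ℕ, g = bshift^[n] f}).topologicalClosure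

/-- `E_f` for a single function. -/
def Ef (f : H2 X) : Submodule ℂ (H2 X) :=
  EF {f}

/-- `X_*(F) = ⋂_m closed-span {f̂(k) : k ≥ m, f ∈ F}`. -/
def XstarF (F : Set (H2 X)) : Submodule ℂ X :=
  ⨅ m : ℕ, (Submodule.span ℂ {x : X | ∃ f ∈ F, ∃ k ≥ m, x = f k}).topologicalClosure

def Xstar (f : H2 X) : Submodule ℂ X := XstarF {f}

/-- `P : X → X` is an orthogonal projection: idempotent and self-adjoint. -/
def IsOrthoProj {Y : Type*} [NormedAddCommGroup Y] [InnerProductSpace ℂ Y]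
    (P : Y →L[ℂ] Y) : Prop :=
  (∀ x, P (P x) = P x) ∧ ∀ x y, ⟪P x, y⟫_ℂ = ⟪x, P y⟫_ℂ

/-- A sequence in a Hilbert space is completely relatively compact if for every orthogonal
projection `P` the normalized sequence `{P aₖ / ‖P aₖ‖ : P aₖ ≠ 0}` is relatively compact. -/
def CRC {Y : Type*} [NormedAddCommGroup Y] [InnerProductSpace ℂ Y] (a : ℕ → Y) : Prop :=
  ∀ P : Y →L[ℂ] Y, IsOrthoProj P →
    IsCompact (closure {v : Y | ∃ k, P (a k) ≠ 0 ∧ v = ‖P (a k)‖⁻¹ • P (a k)})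

/-- A subset of `ℕ` is Hadamard lacunary. -/
def HadLac (Λ : Set ℕ) : Prop :=
  ∃ d : ℝ, 1 < d ∧ ∀ m ∈ Λ, ∀ n ∈ Λ, m < n → d * m ≤ n

/-- The Fourier spectrum. -/
def spec (f : H2 X) : Set ℕ := {k : ℕ | f k ≠ 0}

/-- `H²(𝔻, Y)` for a subspace `Y ⊆ X`, as a submodule of `H²(𝔻, X)`. -/
def H2sub (Y : Submodule ℂ X) : Submodule ℂ (H2 X) where
  carrier := {g : H2 X | ∀ n, g n ∈ Y}
  add_mem' := by
    intro a b ha hb n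
    have : (↑(a + b) : ∀ _ : ℕ, X) n = a n + b n := by
      rw [lp.coeFn_add]; rfl
    rw [this]
    exact Y.add_mem (ha n) (hb n)
  zero_mem' := by
    intro n
    have : (↑(0 : H2 X) : ∀ _ : ℕ, X) n = 0 := by rw [lp.coeFn_zero]; rfl
    rw [this]
    exact Y.zero_mem
  smul_mem' := by
    intro c a ha n
    have : (↑(c • a) : ∀ _ : ℕ, X) n = c • a n := by rw [lp.coeFn_smul]; rfl
    rw [this]
    exact Y.smul_mem c (ha n)

/-- A polynomial: finitely many nonzero Taylor coefficients. -/
def PolyH2 (f : H2 X) : Prop := {n : ℕ | f n ≠ 0}.Finite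

/-!
Let `b` be the orthonormal basis. From each spectrum `Λ i` select infinitely many pivots such that
the merged sequence of pivots `n 0 < n 1 < ⋯` more than doubles at every step. At a pivot `p`
chosen from `Λ i`, the coefficient of `ψ` in direction `b i` is `2 ^ (-p ^ 2)`; all other
coefficients required by the spectra together contribute at most `2 ^ (-5 * k ^ 2)` at position
`k`. Among the coefficients at positions `k ≥ p / 2` the pivot then dominates the sum of all the
others, because `5 * (p / 2) ^ 2 > p ^ 2` and the next pivot is too far away. Hence `2 ^ (p ^ 2) •
S* ^ (p - m) ψ` tends to the monomial `z ^ m b i` as `p` runs through the pivots chosen from `Λ i`,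
and the monomials span a dense subspace.
-/

open Filter Topology

section SummableNorm

variable {ι : Type*} {E : ι → Type*} [∀ i, NormedAddCommGroup (E i)] {p : ℝ≥0∞}

theorem memℓp_of_summable_norm {f : ∀ i, E i} (hp : 1 ≤ p) (hf : Summable fun i => ‖f i‖) :
    Memℓp f p :=
  (memℓp_gen (p := 1) (by simpa using hf)).of_exponent_ge hp

theorem lp_norm_le_of_hasSum [Fact (1 ≤ p)] (hp : p ≠ ∞) {f : lp E p} {a : ι → ℝ} {s : ℝ}
    (ha : HasSum a s) (hf : ∀ i, ‖f i‖ ≤ a i) : ‖f‖ ≤ s := by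
  classical
  rw [← (lp.hasSum_single hp f).tsum_eq]
  refine tsum_of_norm_bounded ha fun i => ?_
  rw [lp.norm_single (zero_lt_one.trans_le Fact.out)]
  exact hf i

end SummableNorm

theorem bshift_iterate_apply (f : H2 X) (n k : ℕ) : (bshift^[n] f) k = f (n + k) := by
  induction n generalizing f with
  | zero => simp
  | succ n ih =>
    rw [Function.iterate_succ_apply, ih, Nat.add_right_comm]
    rfl

/-- The monomial `z ^ m x` of `H²(𝔻, X)`, as the sequence with the single entry `x` at `m`; these
functions are total in `H²(𝔻, X)`, so cyclicity is tested on them. -/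
abbrev monomial (m : ℕ) (x : X) : H2 X :=
  lp.single 2 m x

theorem mem_Ef_of_forall_exists_norm_sub_lt {f g : H2 X}
    (h : ∀ ε > 0, ∃ (c : ℂ) (N : ℕ), ‖g - c • bshift^[N] f‖ < ε) : g ∈ Ef f := by
  refine Metric.mem_closure_iff.2 fun ε hε => ?_
  obtain ⟨c, N, hcN⟩ := h ε hε
  refine ⟨c • bshift^[N] f, ?_, by rwa [dist_eq_norm]⟩
  exact Submodule.smul_mem _ c (Submodule.subset_span ⟨f, rfl, N, rfl⟩)

theorem Ef_eq_top_of_monomial_mem {f : H2 X} {T : Set X}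
    (hT : (Submodule.span ℂ T).topologicalClosure = ⊤)
    (h : ∀ m, ∀ x ∈ T, monomial m x ∈ Ef f) : Ef f = ⊤ := by
  have hclosed : IsClosed (Ef f : Set (H2 X)) := Submodule.isClosed_topologicalClosure _
  have hmonomial (m : ℕ) (x : X) : monomial m x ∈ Ef f := by
    let L : X →ₗ[ℂ] H2 X := lp.lsingle (E := fun _ : ℕ => X) 2 m
    have hspan : Submodule.span ℂ T ≤ (Ef f).comap L := Submodule.span_le.2 (h m)
    have hcomap : IsClosed ((Ef f).comap L : Set X) :=
      hclosed.preimage (lp.isometry_single m).continuous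
    exact Submodule.topologicalClosure_minimal _ hspan hcomap (hT ▸ Submodule.mem_top)
  refine Submodule.eq_top_iff'.2 fun g => ?_
  exact hclosed.mem_of_tendsto (lp.hasSum_single ENNReal.ofNat_ne_top g)
    (Eventually.of_forall fun s => sum_mem fun m _ => hmonomial m _)

section PivotCoeff

/-- The coefficient sequence `k ↦ 2 ^ (-k ^ 2) * [k = n s] * e s + 2 ^ (-5 * k ^ 2) * v k`: a
dominant lacunary series with frequencies `n s`, plus a perturbation so small that it can carry
any prescribed spectrum without affecting cyclicity. -/
def pivotCoeff (n : ℕ → ℕ) (e v : ℕ → X) (k : ℕ) : X :=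
  (1 / 2 : ℂ) ^ (k ^ 2) • Function.extend n e 0 k + (1 / 2 : ℂ) ^ (5 * k ^ 2) • v k

theorem norm_half_pow_smul_le {a b : ℕ} {x : X} (hx : ‖x‖ ≤ 1) (hba : b ≤ a) :
    ‖(1 / 2 : ℂ) ^ a • x‖ ≤ (1 / 2 : ℝ) ^ b :=
  calc ‖(1 / 2 : ℂ) ^ a • x‖ = (1 / 2 : ℝ) ^ a * ‖x‖ := by simp [norm_smul]
    _ ≤ (1 / 2 : ℝ) ^ a := mul_le_of_le_one_right (by positivity) hx
    _ ≤ (1 / 2 : ℝ) ^ b := pow_le_pow_of_le_one (by norm_num) (by norm_num) hba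

variable {n : ℕ → ℕ} {e v : ℕ → X}

theorem norm_pivotCoeff_le (he : ∀ s, ‖e s‖ ≤ 1) (hv : ∀ k, ‖v k‖ ≤ 1) (k : ℕ) :
    ‖pivotCoeff n e v k‖ ≤ 2 * (1 / 2 : ℝ) ^ k := by
  have hextend : ‖Function.extend n e 0 k‖ ≤ 1 := by
    classical
    rw [Function.extend_def]
    split_ifs
    · exact he _
    · simp
  have hsq : k ≤ k ^ 2 := Nat.le_self_pow two_ne_zero k
  rw [two_mul]
  exact norm_add_le_of_le (norm_half_pow_smul_le hextend hsq)
    (norm_half_pow_smul_le (hv k) (by omega))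

theorem strictMono_of_two_mul_lt (hn : ∀ s, 2 * n s < n (s + 1)) : StrictMono n :=
  strictMono_nat_of_lt_succ fun s => by have := hn s; omega

theorem norm_pivot_sub_monomial_le (hn : ∀ s, 2 * n s < n (s + 1)) (he : ∀ s, ‖e s‖ ≤ 1)
    {s k : ℕ} (hk : n s ≤ 2 * k) :
    ‖(1 / 2 : ℂ) ^ (k ^ 2) • Function.extend n e 0 k
      - monomial (n s) ((1 / 2 : ℂ) ^ (n s ^ 2) • e s) k‖
        ≤ (1 / 2 : ℝ) ^ (n s ^ 2 + k) := by
  have hmono := strictMono_of_two_mul_lt hn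
  by_cases hpivot : ∃ t, n t = k
  · obtain ⟨t, rfl⟩ := hpivot
    rw [hmono.injective.extend_apply]
    obtain hts | rfl | hst := lt_trichotomy t s
    · have hle : n (t + 1) ≤ n s := hmono.monotone hts
      have := hn t
      omega
    · simp
    · have hlt : n s + 1 ≤ n t := hmono hst
      rw [lp.single_apply_ne _ _ _ (hmono hst).ne', sub_zero]
      exact norm_half_pow_smul_le (he t) (by nlinarith)
  · have hne : k ≠ n s := fun h => hpivot ⟨s, h.symm⟩
    simp [Function.extend_apply' _ _ _ hpivot, hne]

theorem norm_pivotCoeff_sub_monomial_le (hn : ∀ s, 2 * n s < n (s + 1)) (he : ∀ s, ‖e s‖ ≤ 1)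
    (hv : ∀ k, ‖v k‖ ≤ 1) {s k : ℕ} (hk : n s ≤ 2 * k) :
    ‖pivotCoeff n e v k - monomial (n s) ((1 / 2 : ℂ) ^ (n s ^ 2) • e s) k‖
      ≤ 2 * (1 / 2 : ℝ) ^ (n s ^ 2 + k) := by
  have hexp : n s ^ 2 + k ≤ 5 * k ^ 2 := by nlinarith [Nat.le_self_pow two_ne_zero k]
  rw [pivotCoeff, add_sub_right_comm, two_mul]
  exact norm_add_le_of_le (norm_pivot_sub_monomial_le hn he hk)
    (norm_half_pow_smul_le (hv k) hexp)

theorem norm_monomial_sub_smul_bshift_le (hn : ∀ s, 2 * n s < n (s + 1)) (he : ∀ s, ‖e s‖ ≤ 1)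
    (hv : ∀ k, ‖v k‖ ≤ 1) {f : H2 X} (hf : ⇑f = pivotCoeff n e v) {m s : ℕ}
    (hm : 2 * m ≤ n s) :
    ‖monomial m (e s) - (2 : ℂ) ^ (n s ^ 2) • bshift^[n s - m] f‖
      ≤ 4 * (1 / 2 : ℝ) ^ (n s - m) := by
  set N := n s - m
  have hgeom : HasSum (fun k : ℕ => 2 * (1 / 2 : ℝ) ^ N * (1 / 2 : ℝ) ^ k)
      (4 * (1 / 2 : ℝ) ^ N) := by
    have hfour : 4 * (1 / 2 : ℝ) ^ N = 2 * (1 / 2 : ℝ) ^ N * 2 := by ring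
    exact hfour ▸ hasSum_geometric_two.mul_left (2 * (1 / 2 : ℝ) ^ N)
  refine lp_norm_le_of_hasSum ENNReal.ofNat_ne_top hgeom fun k => ?_
  have hfactor : (monomial m (e s) - (2 : ℂ) ^ (n s ^ 2) • bshift^[N] f) k =
      -((2 : ℂ) ^ (n s ^ 2) • (pivotCoeff n e v (N + k)
        - monomial (n s) ((1 / 2 : ℂ) ^ (n s ^ 2) • e s) (N + k))) := by
    have hiff : N + k = n s ↔ k = m := by omega
    change monomial m (e s) k - (2 : ℂ) ^ (n s ^ 2) • (bshift^[N] f) k = _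
    simp [bshift_iterate_apply, hf, Pi.single_apply, hiff, smul_sub, smul_ite]
  calc ‖(monomial m (e s) - (2 : ℂ) ^ (n s ^ 2) • bshift^[N] f) k‖
      ≤ 2 ^ (n s ^ 2) * (2 * (1 / 2 : ℝ) ^ (n s ^ 2 + (N + k))) := by
        rw [hfactor, norm_neg, norm_smul, norm_pow, Complex.norm_ofNat]
        gcongr
        exact norm_pivotCoeff_sub_monomial_le hn he hv (by omega)
    _ = (2 * (1 / 2 : ℝ)) ^ (n s ^ 2) * (2 * (1 / 2 : ℝ) ^ N * (1 / 2 : ℝ) ^ k) := by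
        rw [mul_pow, pow_add, pow_add]
        ring
    _ = 2 * (1 / 2 : ℝ) ^ N * (1 / 2 : ℝ) ^ k := by norm_num

theorem monomial_mem_Ef_of_frequently_eq (hn : ∀ s, 2 * n s < n (s + 1)) (he : ∀ s, ‖e s‖ ≤ 1)
    (hv : ∀ k, ‖v k‖ ≤ 1) {f : H2 X} (hf : ⇑f = pivotCoeff n e v) (m : ℕ) {x : X}
    (hx : ∃ᶠ s in atTop, e s = x) : monomial m x ∈ Ef f := by
  refine mem_Ef_of_forall_exists_norm_sub_lt fun ε hε => ?_
  have hntop : Tendsto n atTop atTop := (strictMono_of_two_mul_lt hn).tendsto_atTop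
  have hlim : Tendsto (fun s => 4 * (1 / 2 : ℝ) ^ (n s - m)) atTop (𝓝 0) := by
    have hpow := (tendsto_pow_atTop_nhds_zero_of_lt_one (r := (1 / 2 : ℝ)) (by norm_num)
      (by norm_num)).comp ((tendsto_sub_atTop_nat m).comp hntop)
    simpa using hpow.const_mul 4
  obtain ⟨s, rfl, hm, hs⟩ := (hx.and_eventually <|
    (hntop.eventually_ge_atTop (2 * m)).and (hlim.eventually_lt_const hε)).exists
  exact ⟨_, _, (norm_monomial_sub_smul_bshift_le hn he hv hf hm).trans_lt hs⟩

theorem inner_pivotCoeff_ne_zero_iff {ι : Type*} {b : ι → X} (hb : Orthonormal ℂ b)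
    {Λ : ι → Set ℕ} (hn : n.Injective) {c : ℕ → ι} (hΛ : ∀ s, n s ∈ Λ (c s))
    (hv : ∀ k i, ⟪b i, v k⟫_ℂ ≠ 0 ↔ k ∈ Λ i ∧ ¬∃ s, n s = k ∧ c s = i) (k : ℕ) (i : ι) :
    ⟪b i, pivotCoeff n (b ∘ c) v k⟫_ℂ ≠ 0 ↔ k ∈ Λ i := by
  rw [pivotCoeff, inner_add_right, inner_smul_right, inner_smul_right]
  by_cases hpivot : ∃ s, n s = k ∧ c s = i
  · have hvki : ⟪b i, v k⟫_ℂ = 0 := not_not.1 fun h => ((hv k i).1 h).2 hpivot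
    obtain ⟨s, rfl, rfl⟩ := hpivot
    simp [hn.extend_apply, hvki, hΛ s, hb.1]
  · have hextend : ⟪b i, Function.extend n (b ∘ c) 0 k⟫_ℂ = 0 := by
      by_cases hk : ∃ s, n s = k
      · obtain ⟨s, rfl⟩ := hk
        rw [hn.extend_apply]
        exact hb.2 fun h => hpivot ⟨s, rfl, h.symm⟩
      · simp [Function.extend_apply' _ _ _ hk]
    have hvki : ⟪b i, v k⟫_ℂ ≠ 0 ↔ k ∈ Λ i := by rw [hv, and_iff_left hpivot]
    rw [← hvki]
    simp [hextend]

end PivotCoeff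

theorem exists_seq_mem_and_apply_lt_succ {Λ : ℕ → Set ℕ} (hΛ : ∀ s, (Λ s).Infinite) (g : ℕ → ℕ) :
    ∃ n : ℕ → ℕ, (∀ s, n s ∈ Λ s) ∧ ∀ s, g (n s) < n (s + 1) := by
  choose next hnext_mem hlt_next using fun s N => (hΛ s).exists_gt N
  let n : ℕ → ℕ := Nat.rec (next 0 0) fun s p => next (s + 1) (g p)
  refine ⟨n, fun s => ?_, fun s => hlt_next (s + 1) (g (n s))⟩
  cases s <;> exact hnext_mem _ _

theorem exists_seq_frequently_eq (ι : Type*) [Countable ι] [Nonempty ι] :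
    ∃ c : ℕ → ι, ∀ i, ∃ᶠ s in atTop, c s = i := by
  obtain ⟨enum, henum⟩ := exists_surjective_nat ι
  refine ⟨fun s => enum s.unpair.1, fun i => frequently_atTop.2 fun M => ?_⟩
  obtain ⟨a, rfl⟩ := henum i
  exact ⟨Nat.pair a M, Nat.right_le_pair a M, by simp⟩

section HilbertBasis

variable {ι : Type*} [Countable ι] (b : HilbertBasis ι ℂ X)

theorem exists_norm_le_one_and_inner_ne_zero_iff_mem (S : Set ι) :
    ∃ x : X, ‖x‖ ≤ 1 ∧ ∀ i, ⟪b i, x⟫_ℂ ≠ 0 ↔ i ∈ S := by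
  obtain ⟨ε, hε, c, hsum, -⟩ := NNReal.exists_pos_sum_of_countable one_ne_zero ι
  have hmem : Memℓp (S.indicator fun i => ((ε i : ℝ) : ℂ)) 2 := by
    refine memℓp_of_summable_norm one_le_two (.of_nonneg_of_le (fun _ => norm_nonneg _)
      (fun i => norm_indicator_le_norm_self _ i) ?_)
    simpa using NNReal.summable_coe.2 hsum.summable
  let y : X := b.repr.symm ⟨_, hmem⟩
  have hy (i : ι) : ⟪b i, y⟫_ℂ ≠ 0 ↔ i ∈ S := by
    simp [y, ← b.repr_apply_apply, (hε i).ne']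
  have hpos : 0 < 1 + ‖y‖ := by positivity
  refine ⟨((1 + ‖y‖ : ℝ) : ℂ)⁻¹ • y, ?_, fun i => ?_⟩
  · rw [norm_smul, norm_inv, Complex.norm_of_nonneg hpos.le, inv_mul_le_one₀ hpos]
    exact le_add_of_nonneg_left zero_le_one
  · rw [← hy i, inner_smul_right, mul_ne_zero_iff_left]
    exact inv_ne_zero (Complex.ofReal_ne_zero.2 hpos.ne')

theorem exists_cyclic_with_prescribed_lacunary_spectra_general [Nonempty ι] {Λ : ι → Set ℕ}
    (hΛ : ∀ i, (Λ i).Infinite) :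
    ∃ ψ : H2 X, Ef ψ = ⊤ ∧ ∀ i, {k : ℕ | ⟪b i, ψ k⟫_ℂ ≠ 0} = Λ i := by
  obtain ⟨c, hc⟩ := exists_seq_frequently_eq ι
  obtain ⟨n, hmem, hn⟩ := exists_seq_mem_and_apply_lt_succ (fun s => hΛ (c s)) (2 * ·)
  choose v hv hv_supp using fun k : ℕ => exists_norm_le_one_and_inner_ne_zero_iff_mem b
    {i | k ∈ Λ i ∧ ¬∃ s, n s = k ∧ c s = i}
  have hinj : n.Injective := (strictMono_of_two_mul_lt hn).injective
  have he (s : ℕ) : ‖(b ∘ c) s‖ ≤ 1 := (b.orthonormal.1 (c s)).le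
  have hψ : Memℓp (pivotCoeff n (b ∘ c) v) 2 :=
    memℓp_of_summable_norm one_le_two <| .of_nonneg_of_le (fun _ => norm_nonneg _)
      (norm_pivotCoeff_le he hv) (summable_geometric_two.mul_left 2)
  refine ⟨⟨_, hψ⟩, Ef_eq_top_of_monomial_mem b.dense_span ?_, fun i => Set.ext fun k => ?_⟩
  · rintro m _ ⟨i, rfl⟩
    exact monomial_mem_Ef_of_frequently_eq hn he hv rfl m
      ((hc i).mono fun s hs => congrArg b hs)
  · exact inner_pivotCoeff_ne_zero_iff b.orthonormal hinj hmem hv_supp k i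

end HilbertBasis

/-- Given arbitrary infinite Hadamard lacunary sets `Λ₁, …, Λ_d`, there is a cyclic function
`ψ = (ψ₁, …, ψ_d) ∈ H²(𝔻, ℂ^d)` with `σ(ψᵢ) = Λᵢ` for every `i`. -/
theorem exists_cyclic_with_prescribed_lacunary_spectra
    (d : ℕ) (hd : 1 ≤ d)
    (Λ : Fin d → Set ℕ) (hlac : ∀ i, HadLac (Λ i)) (hinf : ∀ i, (Λ i).Infinite) :
    ∃ ψ : H2 (EuclideanSpace ℂ (Fin d)),
      Ef ψ = ⊤ ∧ ∀ i : Fin d, {k : ℕ | ψ k i ≠ 0} = Λ i := by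
  have : Nonempty (Fin d) := ⟨⟨0, hd⟩⟩
  simpa [EuclideanSpace.inner_single_left] using
    exists_cyclic_with_prescribed_lacunary_spectra_general
      (EuclideanSpace.basisFun (Fin d) ℂ).toHilbertBasis hinf

end
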